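/- z(1/2) = Γ(1/4)^2 / (2π^{3/2}) and z'(1/2) = 4√π / Γ(1/4)^2, where z(x) = ₂F₁(1/2, 1/2; 1; x). -/

import Mathlib

/-- Ascending Pochhammer symbol `(a)_n = a(a+1)⋯(a+n-1)`. -/
noncomputable def poch (a : ℝ) (n : ℕ) : ℝ := ∏ i ∈ Finset.range n, (a + i)

/-- Gaussian hypergeometric series `₂F₁(a,b;c;x)`. -/
noncomputable def hypF (a b c x : ℝ) : ℝ :=
  ∑' m : ℕ, poch a m * poch b m / poch c m * x ^ m / m.factorial


open Real Set MeasureTheory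

lemma poch_one (n : ℕ) : poch 1 n = n.factorial := by
  unfold poch
  induction n with
  | zero => simp
  | succ k ih => rw [Finset.prod_range_succ, ih, Nat.factorial_succ]; push_cast; ring

lemma poch_asc (a : ℝ) (n : ℕ) : poch a n = (ascPochhammer ℕ n).smeval a := by
  rw [Polynomial.ascPochhammer_smeval_eq_eval]
  unfold poch
  induction n with
  | zero => simp
  | succ k ih => rw [Finset.prod_range_succ, ih, ascPochhammer_succ_eval]

lemma poch_choose (n : ℕ) : Ring.choose ((1/2 : ℝ) + n - 1) n = poch (1/2) n / n.factorial := by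
  rw [← Ring.multichoose_eq, poch_asc, ← Ring.factorial_nsmul_multichoose_eq_ascPochhammer]
  have : (n.factorial : ℝ) ≠ 0 := by positivity
  rw [nsmul_eq_mul]; field_simp

lemma binom_sum (y : ℝ) (hy : |y| < 1) :
    HasSum (fun n : ℕ => poch (1/2) n / n.factorial * y ^ n) (1 / √(1 - y)) := by
  have h := (Real.one_div_one_sub_rpow_hasFPowerSeriesOnBall_zero (1/2)).hasSum (y := y)
    (by simpa [Metric.mem_eball, edist_dist, ENNReal.ofReal_lt_one] using hy)
  simp only [zero_add, ← Real.sqrt_eq_rpow] at h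
  refine (congrArg (fun f => HasSum f (1 / √(1 - y))) (funext fun n => ?_)).mp h
  rw [FormalMultilinearSeries.ofScalars_apply_eq, poch_choose]
  simp

lemma sin_int (n : ℕ) : (∫ x in 0..π, sin x ^ (2 * n)) = π * (poch (1/2) n / n.factorial) := by
  rw [integral_sin_pow_even]
  congr 1
  unfold poch
  induction n with
  | zero => simp
  | succ k ih =>
    rw [Finset.prod_range_succ, ih, Finset.prod_range_succ, Nat.factorial_succ]
    have : (k.factorial : ℝ) ≠ 0 := by positivity
    push_cast; field_simp; ring

lemma hyp_int (x : ℝ) (hx : |x| < 1) :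
    hypF (1/2) (1/2) 1 x = 1 / π * ∫ t in 0..π, 1 / √(1 - x * sin t ^ 2) := by
  have hp : ∀ n, 0 ≤ poch (1/2) n := fun n => Finset.prod_nonneg fun i _ => by positivity
  have hs : HasSum (fun n : ℕ => ∫ t in 0..π, poch (1/2) n / n.factorial * (x * sin t ^ 2) ^ n)
      (∫ t in 0..π, 1 / √(1 - x * sin t ^ 2)) := by
    refine intervalIntegral.hasSum_integral_of_dominated_convergence
      (fun n _ => poch (1/2) n / n.factorial * |x| ^ n) ?_ ?_ ?_ ?_ ?_
    · intro n
      exact (by fun_prop : Continuous _).aestronglyMeasurable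
    · intro n
      refine .of_forall fun t _ => ?_
      rw [norm_mul, norm_pow, Real.norm_of_nonneg (div_nonneg (hp n) (by positivity))]
      have : ‖x * sin t ^ 2‖ ≤ |x| := by
        rw [norm_mul, Real.norm_eq_abs, Real.norm_of_nonneg (sq_nonneg _)]
        exact mul_le_of_le_one_right (abs_nonneg _) (sin_sq_le_one t)
      have := div_nonneg (hp n) (by positivity : (0:ℝ) ≤ n.factorial)
      gcongr
    · exact .of_forall fun t _ => (binom_sum |x| (by simpa using hx)).summable
    · simp
    · refine .of_forall fun t _ => binom_sum _ ?_
      rw [abs_mul, abs_of_nonneg (sq_nonneg (sin t))]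
      exact lt_of_le_of_lt (mul_le_of_le_one_right (abs_nonneg _) (sin_sq_le_one t)) hx
  rw [← hs.tsum_eq, ← tsum_mul_left]
  unfold hypF
  congr 1; ext n
  simp only [mul_pow, ← pow_mul, intervalIntegral.integral_const_mul, sin_int, poch_one]
  have : (n.factorial : ℝ) ≠ 0 := by positivity
  field_simp

lemma beta_int (a b : ℝ) (ha : 0 < a) (hb : 0 < b) :
    ∫ t in Ioo (0:ℝ) 1, t ^ (a - 1) * (1 - t) ^ (b - 1) = Gamma a * Gamma b / Gamma (a + b) := by
  have h := ProbabilityTheory.beta_eq_betaIntegralReal a b ha hb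
  rw [ProbabilityTheory.beta] at h
  rw [h, Complex.betaIntegral, intervalIntegral.integral_of_le (by norm_num),
    integral_Ioc_eq_integral_Ioo, ← RCLike.re_eq_complex_re, ← integral_re]
  · refine setIntegral_congr_fun measurableSet_Ioo fun t ht => ?_
    have h1 : (1 - (t:ℂ)) = ((1 - t : ℝ) : ℂ) := by push_cast; rfl
    have h2 : ((a:ℂ) - 1) = ((a - 1 : ℝ) : ℂ) := by push_cast; rfl
    have h3 : ((b:ℂ) - 1) = ((b - 1 : ℝ) : ℂ) := by push_cast; rfl
    simp only [h1, h2, h3]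
    rw [← Complex.ofReal_cpow ht.1.le, ← Complex.ofReal_cpow (by linarith [ht.2]),
      ← Complex.ofReal_mul]
    simp
  · have := Complex.betaIntegral_convergent (u := a) (v := b) (by simpa) (by simpa)
    rw [intervalIntegrable_iff_integrableOn_Ioo_of_le (by norm_num)] at this
    exact this

lemma cos4_image : (fun t => cos t ^ 4) '' Ioo 0 (π/2) = Ioo 0 1 := by
  ext y
  constructor
  · rintro ⟨t, ht, rfl⟩
    have h0 : 0 < cos t := cos_pos_of_mem_Ioo ⟨by linarith [ht.1, pi_pos], ht.2⟩
    have h1 : cos t < 1 := by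
      have := Real.cos_lt_cos_of_nonneg_of_le_pi_div_two le_rfl ht.2.le ht.1
      simpa using this
    exact ⟨by positivity, pow_lt_one₀ h0.le h1 (by norm_num)⟩
  · rintro ⟨h0, h1⟩
    have e0 : 0 < y ^ (1/4 : ℝ) := by positivity
    have e1 : y ^ (1/4 : ℝ) < 1 := Real.rpow_lt_one h0.le h1 (by norm_num)
    refine ⟨arccos (y ^ (1/4 : ℝ)), ⟨arccos_pos.2 e1, arccos_lt_pi_div_two.2 e0⟩, ?_⟩
    simp only
    rw [cos_arccos (by linarith) e1.le, ← rpow_natCast, ← rpow_mul h0.le]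
    norm_num

lemma subst (a : ℝ) :
    ∫ t in Ioo (0:ℝ) 1, t ^ (a - 1) * (1 - t) ^ ((1/2:ℝ) - 1) =
    4 * ∫ t in 0..(π/2), cos t ^ (4 * a - 1) / √(1 + cos t ^ 2) := by
  rw [← cos4_image, integral_image_eq_integral_abs_deriv_smul measurableSet_Ioo
    (f' := fun t => 4 * cos t ^ 3 * (- sin t)), intervalIntegral.integral_of_le (by positivity),
    integral_Ioc_eq_integral_Ioo, ← integral_const_mul]
  · refine setIntegral_congr_fun measurableSet_Ioo fun t ht => ?_
    have h0 : 0 < cos t := cos_pos_of_mem_Ioo ⟨by linarith [ht.1, pi_pos], ht.2⟩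
    have hs : 0 < sin t := sin_pos_of_pos_of_lt_pi ht.1 (by linarith [ht.2, pi_pos])
    have e : 1 - cos t ^ 4 = sin t ^ 2 * (1 + cos t ^ 2) := by rw [sin_sq]; ring
    simp only [smul_eq_mul]
    rw [e, show (1/2:ℝ) - 1 = -(1/2) by norm_num, rpow_neg (by positivity), ← sqrt_eq_rpow,
      sqrt_mul (by positivity), sqrt_sq hs.le, ← rpow_natCast (cos t) 4, ← rpow_mul h0.le,
      abs_of_nonpos (by have : 0 < 4 * cos t ^ 3 * sin t := by positivity
                        linarith),
      show 4 * a - 1 = 3 + ((4:ℕ):ℝ) * (a - 1) by push_cast; ring, rpow_add h0]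
    have : cos t ^ (3:ℝ) = cos t ^ 3 := by rw [← rpow_natCast]; norm_num
    rw [this]
    have : 0 < √(1 + cos t ^ 2) := by positivity
    field_simp
  · intro t _
    have := ((hasDerivAt_cos t).pow 4).hasDerivWithinAt (s := Ioo 0 (π/2))
    exact this
  · intro s hs t ht h
    have h0 : 0 < cos t := cos_pos_of_mem_Ioo ⟨by linarith [ht.1, pi_pos], ht.2⟩
    have h1 : 0 < cos s := cos_pos_of_mem_Ioo ⟨by linarith [hs.1, pi_pos], hs.2⟩
    exact injOn_cos ⟨hs.1.le, by linarith [hs.2, pi_pos]⟩ ⟨ht.1.le, by linarith [ht.2, pi_pos]⟩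
      ((pow_left_inj₀ h1.le h0.le (by norm_num)).1 h)

lemma half_int (g : ℝ → ℝ) (hg : Continuous g) :
    ∫ t in 0..π, g (cos t ^ 2) = 2 * ∫ t in 0..(π/2), g (cos t ^ 2) := by
  have hc : Continuous fun t => g (cos t ^ 2) := by fun_prop
  rw [← intervalIntegral.integral_add_adjacent_intervals (b := π/2)
    (hc.intervalIntegrable _ _) (hc.intervalIntegrable _ _)]
  have := intervalIntegral.integral_comp_sub_left (fun t => g (cos t ^ 2)) π (a := 0) (b := π/2)
  simp only [cos_pi_sub, neg_sq, sub_zero] at this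
  rw [show π - π/2 = π/2 by ring] at this
  rw [← this]; ring

lemma den_pos (t : ℝ) : 0 < 1 + cos t ^ 2 := by positivity

lemma int_A : ∫ t in 0..π, 1 / √(1 + cos t ^ 2) = Gamma (1/4) * √π / Gamma (3/4) / 2 := by
  have h := beta_int (1/4) (1/2) (by norm_num) (by norm_num)
  rw [subst, Gamma_one_half_eq] at h
  norm_num at h
  have h2 := half_int (fun u => 1 / √(1 + |u|)) (by
    refine continuous_const.div (by fun_prop) fun u => ?_
    positivity)
  simp only [abs_pow, sq_abs] at h2
  simp only [one_div] at h2 ⊢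
  norm_num
  linarith

lemma int_B : ∫ t in 0..π, cos t ^ 2 / √(1 + cos t ^ 2) =
    2 * Gamma (3/4) * √π / Gamma (1/4) := by
  have h := beta_int (3/4) (1/2) (by norm_num) (by norm_num)
  have hG : Gamma (3/4 + 1/2) = 1/4 * Gamma (1/4) := by
    rw [← Gamma_add_one (by norm_num)]; norm_num
  rw [subst, Gamma_one_half_eq, hG] at h
  have h2 := half_int (fun u => u / √(1 + |u|)) (by
    refine continuous_id.div (by fun_prop) fun u => ?_
    positivity)
  simp only [abs_pow, sq_abs] at h2
  rw [h2]
  have e : ∀ t : ℝ, cos t ^ (4 * (3/4) - 1 : ℝ) = cos t ^ 2 := fun t => by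
    rw [← rpow_natCast]; norm_num
  simp only [e] at h
  have : Gamma (1/4) ≠ 0 := (Gamma_pos_of_pos (by norm_num)).ne'
  field_simp at h ⊢
  linarith

lemma gamma_refl : Gamma (1/4) * Gamma (3/4) = π * √2 := by
  have := Gamma_mul_Gamma_one_sub (1/4)
  rw [show (1 - 1/4 : ℝ) = 3/4 by norm_num, show π * (1/4) = π/4 by ring, sin_pi_div_four] at this
  rw [this]
  have h : √2 * √2 = 2 := mul_self_sqrt (by norm_num)
  have : √2 ≠ 0 := by positivity
  field_simp
  linarith

lemma int_parts : ∫ t in 0..π, sin t ^ 2 / √(1 + cos t ^ 2) ^ 3 =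
    ∫ t in 0..π, cos t ^ 2 / √(1 + cos t ^ 2) := by
  have hc1 : Continuous fun t => sin t ^ 2 / √(1 + cos t ^ 2) ^ 3 :=
    Continuous.div (by fun_prop) (by fun_prop) fun t => by have := den_pos t; positivity
  have hc2 : Continuous fun t => cos t ^ 2 / √(1 + cos t ^ 2) :=
    Continuous.div (by fun_prop) (by fun_prop) fun t => by have := den_pos t; positivity
  have hd : ∀ t ∈ uIcc 0 π, HasDerivAt (fun t => cos t * sin t / √(1 + cos t ^ 2))
      (cos t ^ 2 / √(1 + cos t ^ 2) - sin t ^ 2 / √(1 + cos t ^ 2) ^ 3) t := by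
    intro t _
    have hp := den_pos t
    have h1 := ((((hasDerivAt_cos t).pow 2).const_add 1).sqrt hp.ne')
    have h2 := ((hasDerivAt_cos t).mul (hasDerivAt_sin t)).div h1 (by positivity)
    refine h2.congr_deriv ?_
    symm
    simp only [Pi.pow_apply, Pi.mul_apply]
    set r := √(1 + cos t ^ 2) with hr
    have hr0 : 0 < r := by positivity
    have hr2 : r ^ 2 = 1 + cos t ^ 2 := sq_sqrt hp.le
    have hc : cos t ^ 2 = r ^ 2 - 1 := by linarith
    have hsn : sin t ^ 2 = 2 - r ^ 2 := by rw [sin_sq]; linarith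
    field_simp
    ring_nf
    have h4 : cos t ^ 4 = (r^2-1)^2 := by rw [← hc]; ring
    simp only [hc, hsn, h4]
    ring
  have := intervalIntegral.integral_eq_sub_of_hasDerivAt hd
    ((hc2.sub hc1).intervalIntegrable _ _)
  rw [intervalIntegral.integral_sub (hc2.intervalIntegrable _ _) (hc1.intervalIntegrable _ _)] at this
  simp at this
  linarith

lemma one_sub_pos {x : ℝ} (hx : x ∈ Metric.ball (1/2 : ℝ) (1/4)) (t : ℝ) :
    1/4 ≤ 1 - x * sin t ^ 2 := by
  rw [Metric.mem_ball, Real.dist_eq, abs_lt] at hx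
  nlinarith [sin_sq_le_one t, sq_nonneg (sin t)]

lemma deriv_int : HasDerivAt (fun x => ∫ t in 0..π, 1 / √(1 - x * sin t ^ 2))
    (∫ t in 0..π, sin t ^ 2 / (2 * √(1 - 1/2 * sin t ^ 2) ^ 3)) (1/2) := by
  have hF : ∀ x ∈ Metric.ball (1/2 : ℝ) (1/4), Continuous fun t => 1 / √(1 - x * sin t ^ 2) :=
    fun x hx => Continuous.div (by fun_prop) (by fun_prop) fun t => by
      have : 0 < 1 - x * sin t ^ 2 := by linarith [one_sub_pos hx t]
      positivity
  have hx0 : (1/2:ℝ) ∈ Metric.ball (1/2 : ℝ) (1/4) := Metric.mem_ball_self (by norm_num)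
  have hb : Metric.ball (1/2 : ℝ) (1/4) ∈ nhds (1/2 : ℝ) := Metric.ball_mem_nhds _ (by norm_num)
  have hF' : Continuous fun t => sin t ^ 2 / (2 * √(1 - 1/2 * sin t ^ 2) ^ 3) :=
    Continuous.div (by fun_prop) (by fun_prop) fun t => by
      have : 0 < 1 - 1/2 * sin t ^ 2 := by linarith [one_sub_pos hx0 t]
      positivity
  refine (intervalIntegral.hasDerivAt_integral_of_dominated_loc_of_deriv_le
    (F' := fun x t => sin t ^ 2 / (2 * √(1 - x * sin t ^ 2) ^ 3)) (bound := fun _ => 4)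
    hb ?_ ?_ ?_ ?_ ?_ ?_).2
  · filter_upwards [hb] with x hx
    exact (hF x hx).aestronglyMeasurable
  · exact (hF _ hx0).intervalIntegrable _ _
  · exact hF'.aestronglyMeasurable
  · refine .of_forall fun t _ x hx => ?_
    have h := one_sub_pos hx t
    have h2 : 1/2 ≤ √(1 - x * sin t ^ 2) := by
      apply Real.le_sqrt_of_sq_le; linarith
    have h3 : (1/2)^3 ≤ √(1 - x * sin t ^ 2) ^ 3 := by gcongr
    rw [Real.norm_of_nonneg (by positivity), div_le_iff₀ (by positivity)]
    linarith [sin_sq_le_one t]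
  · simp
  · refine .of_forall fun t _ x hx => ?_
    have h : 0 < 1 - x * sin t ^ 2 := by linarith [one_sub_pos hx t]
    have h1 := ((((hasDerivAt_id x).mul_const (sin t ^ 2)).const_sub 1).sqrt h.ne')
    have h2 := (hasDerivAt_const x (1:ℝ)).div h1 (by simp only [id]; positivity)
    refine h2.congr_deriv ?_
    simp only [id]
    have : 0 < √(1 - x * sin t ^ 2) := by positivity
    field_simp
    ring

lemma sqrt_half (t : ℝ) : √(1 - 1/2 * sin t ^ 2) = √(1 + cos t ^ 2) / √2 := by
  rw [← sqrt_div (den_pos t).le, sin_sq]; congr 1; ring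

theorem z_and_z'_at_half :
    hypF (1/2) (1/2) 1 (1/2)
        = Real.Gamma (1/4) ^ 2 / (2 * Real.pi ^ ((3 : ℝ)/2)) ∧
    deriv (fun t => hypF (1/2) (1/2) 1 t) (1/2)
        = 4 * Real.sqrt Real.pi / Real.Gamma (1/4) ^ 2 := by
  have hG : 0 < Gamma (1/4) := Gamma_pos_of_pos (by norm_num)
  have h34 : Gamma (3/4) = π * √2 / Gamma (1/4) := by
    rw [eq_div_iff hG.ne', mul_comm, gamma_refl]
  have hpi : π ^ ((3:ℝ)/2) = √π ^ 3 := by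
    rw [sqrt_eq_rpow, ← rpow_natCast, ← rpow_mul pi_pos.le]; norm_num
  have hq : √π ^ 2 = π := sq_sqrt pi_pos.le
  have hq0 : 0 < √π := sqrt_pos.2 pi_pos
  have h20 : 0 < √2 := by positivity
  have h2 : √2 ^ 2 = 2 := sq_sqrt (by norm_num)
  constructor
  · rw [hyp_int _ (by norm_num [abs_lt])]
    have e : ∀ t : ℝ, 1 / √(1 - 1/2 * sin t ^ 2) = √2 * (1 / √(1 + cos t ^ 2)) := fun t => by
      rw [sqrt_half]; have := den_pos t; field_simp
    simp only [e]
    rw [intervalIntegral.integral_const_mul, int_A, h34, hpi]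
    field_simp
    rw [show √π ^ 4 = (√π ^ 2) ^ 2 by ring, hq]
  · have hev : (fun t => hypF (1/2) (1/2) 1 t) =ᶠ[nhds (1/2)]
        fun x => 1 / π * ∫ t in 0..π, 1 / √(1 - x * sin t ^ 2) := by
      filter_upwards [Metric.ball_mem_nhds (1/2 : ℝ) (by norm_num : (0:ℝ) < 1/4)] with x hx
      rw [Metric.mem_ball, Real.dist_eq, abs_lt] at hx
      exact hyp_int x (abs_lt.2 ⟨by linarith, by linarith⟩)
    rw [hev.deriv_eq, (deriv_int.const_mul (1/π)).deriv]
    have e : ∀ t : ℝ, sin t ^ 2 / (2 * √(1 - 1/2 * sin t ^ 2) ^ 3) =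
        √2 * (sin t ^ 2 / √(1 + cos t ^ 2) ^ 3) := fun t => by
      rw [sqrt_half]
      have := den_pos t
      have h0 : 0 < √(1 + cos t ^ 2) := by positivity
      field_simp
      rw [h2]
    simp only [e]
    rw [intervalIntegral.integral_const_mul, int_parts, int_B, h34]
    field_simp
    rw [h2]; ring
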